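/- arXiv:1307.7928 — 8 statements merged into one kernel-verified Lean document; each statement's English description precedes it below -/
import Mathlib

section
/- Let X be a topological space, x ∈ X, and let F be a strategy for player II in the game G1(Ω_x, Ω_x). Then for every finite sequence D_0, …, D_n of members of Ω_x there is an open set A with x ∈ A such that for every a ∈ A \ {x} there exists D_a ∈ Ω_x with F(D_0, …, D_n, D_a) = a. -/
open Set Topology

/-- `Ω_x`: the collection of all sets `A ⊆ X` such that `x ∉ A` and `x ∈ cl A`. -/
def OmegaAt {X : Type*} [TopologicalSpace X] (x : X) : Set (Set X) :=
  {A | x ∉ A ∧ x ∈ closure A}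

/-- If `F` is a strategy for player II in `G₁(Ω_x, Ω_x)` (i.e. `F` assigns to each
nonempty finite legal sequence `D₀, …, Dₙ` of members of `Ω_x` a point `F(D₀,…,Dₙ) ∈ Dₙ`),
then for every finite sequence `D₀, …, Dₙ` of members of `Ω_x` there is an open set `A` with
`x ∈ A` such that for every `a ∈ A \ {x}` there is `Dₐ ∈ Ω_x` with `F(D₀, …, Dₙ, Dₐ) = a`. -/
theorem statement0 {X : Type*} [TopologicalSpace X] (x : X)
    (F : (n : ℕ) → (Fin (n + 1) → Set X) → X)
    (hF : ∀ (n : ℕ) (D : Fin (n + 1) → Set X),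
      (∀ i, D i ∈ OmegaAt x) → F n D ∈ D (Fin.last n))
    (n : ℕ) (D : Fin (n + 1) → Set X) (hD : ∀ i, D i ∈ OmegaAt x) :
    ∃ A : Set X, IsOpen A ∧ x ∈ A ∧
      ∀ a ∈ A \ {x}, ∃ Da ∈ OmegaAt x, F (n + 1) (Fin.snoc D Da) = a := by
  -- `B` is the set of points other than `x` that are never an answer to a move after `D`.
  -- If `x ∈ closure B`, then `B` itself is a legal move, and the answer to it lies in `B`.
  let B : Set X := {a | a ≠ x ∧ ∀ Da ∈ OmegaAt x, F (n + 1) (Fin.snoc D Da) ≠ a}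
  have hB : x ∉ closure B := by
    intro hx
    have hBΩ : B ∈ OmegaAt x := ⟨fun h => h.1 rfl, hx⟩
    have hmem := hF (n + 1) (Fin.snoc D B) (fun i => by
      refine Fin.lastCases ?_ (fun j => ?_) i
      · simpa only [Fin.snoc_last] using hBΩ
      · simpa only [Fin.snoc_castSucc] using hD j)
    rw [Fin.snoc_last] at hmem
    exact hmem.2 B hBΩ rfl
  refine ⟨(closure B)ᶜ, isClosed_closure.isOpen_compl, hB, fun a ha => ?_⟩
  by_contra! h
  exact ha.1 (subset_closure ⟨ha.2, h⟩)
end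

section
/- Let X be a topological space and x ∈ X such that player II has a winning strategy F in the game G1(Ω_x, Ω_x). Let 𝒫 be a family such that every element of 𝒫 is a centered family of countable subsets of X, and such that for every neighborhood O of x there exist 𝓑 ∈ 𝒫 and B ∈ 𝓑 with B ⊆ O. Then there is a family (𝓑_s)_{s ∈ ω^{<ω}} of elements of 𝒫, indexed by finite sequences of natural numbers, such that for every choice of sets B_s ∈ 𝓑_s (for all s ∈ ω^{<ω}) and every f ∈ ω^ω, one has x ∈ cl(⋃ { B_s : s is a finite initial segment of f }). -/
/-!
Fix a position of the game. The points `y ≠ x` which player II never plays in answer to the next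
move of player I form a set that cannot belong to `Ω_x`, since II would have to answer it by one of
its own points. Hence all points `y ≠ x` of some neighbourhood of `x` are possible answers
(`eventually_exists_answer`). That neighbourhood contains a member `b` of some `𝓑 ∈ P`, and as
`b` is countable, countably many moves of player I suffice to obtain every point of `b \ {x}` as an
answer (`exists_moves`). Iterating gives a countable tree of positions, indexed by `List ℕ`,
with an element of `P` attached to each node.

Suppose that a set `C s` is chosen from the element of `P` attached to each node `s`. As `C s` meets
the set `b` attached to `s`, either `x ∈ C s` or some successor of `s` makes II answer inside `C s`.
In the second case following such successors yields a play, won by II, whose answers lie in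
`⋃ s, C s`. So `x ∈ closure (⋃ s, C s)`. Finally, the required family assigns to a finite sequence
of length `n` the element of `P` attached to the `n`-th node in an enumeration of the tree: along
every branch `f` all nodes then occur.
-/

open Set Topology Filter

/-- The answer given by the strategy `F` when player I has played the sets in `l`, in order, and
then plays `E`. The default value `∅` is never used, because the indices are below the length of
`l ++ [E]`. -/
def answer {X : Type*} (F : (n : ℕ) → (Fin (n + 1) → Set X) → X) (l : List (Set X)) (E : Set X) :
    X :=
  F l.length fun i => (l ++ [E]).getD i.val ∅

/-- The position reached at a node of the tree, when `E l k` is the `k`-th move available to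
player I at the position `l`. Nodes are read from right to left: `k :: s` is the `k`-th successor
of `s`. -/
def treePos {X : Type*} (E : List (Set X) → ℕ → Set X) : List ℕ → List (Set X)
  | [] => []
  | k :: s => treePos E s ++ [E (treePos E s) k]

theorem answer_mem {X : Type*} [TopologicalSpace X] {x : X}
    {F : (n : ℕ) → (Fin (n + 1) → Set X) → X}
    (hstrat : ∀ (n : ℕ) (D : Fin (n + 1) → Set X),
      (∀ i, D i ∈ OmegaAt x) → F n D ∈ D (Fin.last n))
    {l : List (Set X)} (hl : ∀ A ∈ l, A ∈ OmegaAt x) {E : Set X} (hE : E ∈ OmegaAt x) :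
    answer F l E ∈ E := by
  have h := hstrat l.length (fun i => (l ++ [E]).getD i.val ∅) (by
    intro i
    have hi : i.val < (l ++ [E]).length := by simpa using Nat.lt_succ_iff.1 i.isLt
    rw [List.getD_eq_getElem _ _ hi]
    have hm := List.getElem_mem hi
    rcases List.mem_append.1 hm with h | h
    · exact hl _ h
    · rw [List.mem_singleton.1 h]
      exact hE)
  simpa [answer] using h

theorem answer_eq {X : Type*} (F : (n : ℕ) → (Fin (n + 1) → Set X) → X) (D : ℕ → Set X) (n : ℕ) :
    answer F ((List.range n).map D) (D n) = F n fun i => D i.val := by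
  have key : ∀ (l : List (Set X)) (m : ℕ), l.length = m →
      (∀ i ≤ m, (l ++ [D m]).getD i ∅ = D i) →
      answer F l (D m) = F m fun i => D i.val := by
    rintro l m rfl h
    unfold answer
    congr 1
    funext i
    exact h i.val (Nat.lt_succ_iff.1 i.isLt)
  refine key _ n (by simp) fun i hi => ?_
  have h : (List.range n).map D ++ [D n] = (List.range (n + 1)).map D := by
    simp [List.range_succ]
  rw [h, List.getD_eq_getElem _ _ (by simpa using Nat.lt_succ_iff.2 hi)]
  simp

/-- At every position, all points `y ≠ x` near `x` are answers of player II to some move. -/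
theorem eventually_exists_answer {X : Type*} [TopologicalSpace X] {x : X}
    {F : (n : ℕ) → (Fin (n + 1) → Set X) → X}
    (hstrat : ∀ (n : ℕ) (D : Fin (n + 1) → Set X),
      (∀ i, D i ∈ OmegaAt x) → F n D ∈ D (Fin.last n))
    {l : List (Set X)} (hl : ∀ A ∈ l, A ∈ OmegaAt x) :
    ∀ᶠ y in 𝓝 x, y ≠ x → ∃ E ∈ OmegaAt x, answer F l E = y := by
  by_contra hcon
  have hA : {y | y ≠ x ∧ ∀ E ∈ OmegaAt x, answer F l E ≠ y} ∈ OmegaAt x := by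
    refine ⟨fun h => h.1 rfl, mem_closure_iff_frequently.2 ?_⟩
    refine (Filter.not_eventually.1 hcon).mono fun y hy => ?_
    push Not at hy
    exact hy
  exact (answer_mem hstrat hl hA).2 _ hA rfl

/-- At every position, countably many moves of player I make player II answer every point other
than `x` of a suitable member `b` of a suitable element of `P`. The second hypothesis on `P` rules
out the degenerate case `b = {x}`, in which player I might have no legal move at all. -/
theorem exists_moves {X : Type*} [TopologicalSpace X] {x : X}
    {F : (n : ℕ) → (Fin (n + 1) → Set X) → X}
    (hstrat : ∀ (n : ℕ) (D : Fin (n + 1) → Set X),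
      (∀ i, D i ∈ OmegaAt x) → F n D ∈ D (Fin.last n))
    {P : Set (Set (Set X))}
    (hP : ∀ B ∈ P, (∀ b ∈ B, Set.Countable b) ∧ ∀ b ∈ B, ∀ c ∈ B, (b ∩ c).Nonempty)
    (hx : ∀ B ∈ P, {x} ∉ B)
    (hnt : ∀ O ∈ 𝓝 x, ∃ B ∈ P, ∃ b ∈ B, b ⊆ O)
    (l : List (Set X)) (hl : ∀ A ∈ l, A ∈ OmegaAt x) :
    ∃ (B : Set (Set X)) (b : Set X) (E : ℕ → Set X), B ∈ P ∧ b ∈ B ∧ (∀ k, E k ∈ OmegaAt x) ∧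
      ∀ y ∈ b, y ≠ x → ∃ k, answer F l (E k) = y := by
  obtain ⟨B, hB, b, hb, hbO⟩ := hnt _ (eventually_exists_answer hstrat hl)
  have hne : (b \ {x}).Nonempty := by
    rw [Set.nonempty_iff_ne_empty]
    intro h
    have hbne : b.Nonempty := by simpa using (hP B hB).2 b hb b hb
    rcases Set.subset_singleton_iff_eq.1 (Set.sdiff_eq_empty.1 h) with h | h
    · exact hbne.ne_empty h
    · exact hx B hB (h ▸ hb)
  obtain ⟨e, he⟩ := (((hP B hB).1 b hb).mono Set.sdiff_subset).exists_eq_range hne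
  have hmem : ∀ k, e k ∈ b \ {x} := fun k => he ▸ Set.mem_range_self k
  choose E hE hEe using fun k => hbO (hmem k).1 (hmem k).2
  refine ⟨B, b, E, hB, hb, hE, fun y hy hyx => ?_⟩
  obtain ⟨k, hk⟩ : y ∈ Set.range e := he ▸ ⟨hy, hyx⟩
  exact ⟨k, (hEe k).trans hk⟩

/-- Suppose `F` is a winning strategy for player II in `G₁(Ω_x, Ω_x)` and `𝒫` is a
family each of whose elements is a centered family of countable subsets of `X`, such that every
neighborhood of `x` contains a member of some element of `𝒫`.  Then there is a family
`(𝓑_s)_{s ∈ ω^{<ω}}` of elements of `𝒫` such that for every choice `B_s ∈ 𝓑_s` and every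
`f ∈ ω^ω`, `x ∈ cl (⋃ {B_s : s a finite initial segment of f})`. -/
theorem statement1 {X : Type*} [TopologicalSpace X] (x : X)
    (F : (n : ℕ) → (Fin (n + 1) → Set X) → X)
    (hstrat : ∀ (n : ℕ) (D : Fin (n + 1) → Set X),
      (∀ i, D i ∈ OmegaAt x) → F n D ∈ D (Fin.last n))
    (hwin : ∀ D : ℕ → Set X, (∀ n, D n ∈ OmegaAt x) →
      x ∈ closure {y | ∃ n : ℕ, y = F n fun i => D i.val})
    (P : Set (Set (Set X)))
    (hP : ∀ B ∈ P, (∀ b ∈ B, Set.Countable b) ∧ ∀ b ∈ B, ∀ c ∈ B, (b ∩ c).Nonempty)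
    (hnt : ∀ O ∈ 𝓝 x, ∃ B ∈ P, ∃ b ∈ B, b ⊆ O) :
    ∃ 𝓑 : List ℕ → Set (Set X), (∀ s : List ℕ, 𝓑 s ∈ P) ∧
      ∀ B : List ℕ → Set X, (∀ s : List ℕ, B s ∈ 𝓑 s) →
        ∀ f : ℕ → ℕ, x ∈ closure (⋃ n : ℕ, B (List.ofFn fun i : Fin n => f i.val)) := by
  by_cases hx : ∃ B₀ ∈ P, {x} ∈ B₀
  · -- Every set chosen from an element of `P` with member `{x}` contains `x`.
    obtain ⟨B₀, hB₀, hxB⟩ := hx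
    refine ⟨fun _ => B₀, fun _ => hB₀, fun B hB f => subset_closure ?_⟩
    obtain ⟨y, hy, rfl⟩ := (hP B₀ hB₀).2 _ (hB (List.ofFn fun i : Fin 0 => f i.val)) _ hxB
    exact Set.mem_iUnion.2 ⟨0, hy⟩
  push Not at hx
  choose! Bc b E hBc hb hE hans using exists_moves hstrat hP hx hnt
  have hpos : ∀ s, ∀ A ∈ treePos E s, A ∈ OmegaAt x := by
    intro s
    induction s with
    | nil => simp [treePos]
    | cons k s ih =>
      intro A hA
      rcases List.mem_append.1 hA with h | h
      · exact ih A h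
      · rw [List.mem_singleton.1 h]
        exact hE _ ih k
  obtain ⟨q, hq⟩ := exists_surjective_nat (List ℕ)
  refine ⟨fun t => Bc (treePos E (q t.length)), fun t => hBc _ (hpos _), fun B hB f => ?_⟩
  by_cases hxU : x ∈ ⋃ n : ℕ, B (List.ofFn fun i : Fin n => f i.val)
  · exact subset_closure hxU
  have hstep : ∀ s, ∃ k, answer F (treePos E s) (E (treePos E s) k) ∈
      ⋃ n : ℕ, B (List.ofFn fun i : Fin n => f i.val) := by
    intro s
    obtain ⟨n, rfl⟩ := hq s
    have hBn := hB (List.ofFn fun i : Fin n => f i.val)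
    simp only [List.length_ofFn] at hBn
    obtain ⟨y, hyB, hyb⟩ := (hP _ (hBc _ (hpos (q n)))).2 _ hBn _ (hb _ (hpos (q n)))
    have hyU : y ∈ ⋃ n : ℕ, B (List.ofFn fun i : Fin n => f i.val) := Set.mem_iUnion.2 ⟨n, hyB⟩
    obtain ⟨k, hk⟩ := hans _ (hpos (q n)) y hyb fun h => hxU (h ▸ hyU)
    exact ⟨k, hk ▸ hyU⟩
  choose k hk using hstep
  let t : ℕ → List ℕ := fun n => Nat.rec [] (fun _ s => k s :: s) n
  let D : ℕ → Set X := fun n => E (treePos E (t n)) (k (t n))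
  have ht : ∀ n, treePos E (t n) = (List.range n).map D := by
    intro n
    induction n with
    | zero => rfl
    | succ n ih =>
      rw [List.range_succ, List.map_append, ← ih]
      rfl
  refine closure_mono ?_ (hwin D fun n => hE _ (hpos _) _)
  rintro y ⟨n, rfl⟩
  rw [← answer_eq F D n, ← ht n]
  exact hk (t n)
end

section
/- Let X be a Tychonoff space and x ∈ X. If player II has a winning strategy in the game G1(Ω_x, Ω_x), then X is productively countably tight at x. -/
/-!
Fix a winning strategy `F` for player II. After any finite history, the set of points `p ≠ x` that
`F` never answers next is not in `Ω_x`, since `F` would have to answer it with one of its own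
points; hence all points `p ≠ x` of some neighbourhood `V` of `x` are possible next answers
(`exists_nhds_answers`).

Let `(x, y) ∈ cl A`, where `A` may be assumed to avoid `{x} × Y` (on that fibre the tightness of `Y`
is enough). For each history, `y` is in the closure of the projection of `A ∩ (V × Y)` to `Y`, so
tightness of `Y` gives a countable piece of `A ∩ (V × Y)` whose projection still accumulates at `y`
(`exists_countable_piece`). Every point of the piece is realised as an answer by some next move of
player I, and so the pieces organise themselves into a countable tree of histories. Their union `B`
is countable. If `U × W` is a basic neighbourhood of `(x, y)`, choosing at each node a point of the
piece with second coordinate in `W` yields a play of the game; as `F` wins it, one of the first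
coordinates is in `U`, and `B` meets `U × W`.

A history of length `n` is encoded by `D : ℕ → Set X`, of which only the values below `n` matter;
appending a move `E` is `Function.update D n E`.
-/

open Set Topology

/-- Player II has a winning strategy in the single-selection game `G₁(𝒜, ·)` with winning
condition `Win` on the set of points selected by player II. -/
def HasWinningStrategyII {α : Type*} (𝒜 : Set (Set α)) (Win : Set α → Prop) : Prop :=
  ∃ F : (n : ℕ) → (Fin (n + 1) → Set α) → α,
    (∀ (n : ℕ) (D : Fin (n + 1) → Set α), (∀ i, D i ∈ 𝒜) → F n D ∈ D (Fin.last n)) ∧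
    ∀ D : ℕ → Set α, (∀ n, D n ∈ 𝒜) → Win {y | ∃ n : ℕ, y = F n fun i => D i.val}

/-- `X` has countable tightness at `x`. -/
def CountablyTightAt (X : Type*) [TopologicalSpace X] (x : X) : Prop :=
  ∀ A : Set X, x ∈ closure A → ∃ B ⊆ A, B.Countable ∧ x ∈ closure B

/-- After a legal history of length `n`, every point other than `x` of some neighbourhood of `x` is
the answer of the strategy to some next move. -/
theorem exists_nhds_answers {X : Type*} [TopologicalSpace X] {x : X}
    {F : (n : ℕ) → (Fin (n + 1) → Set X) → X}
    (hF : ∀ (n : ℕ) (D : Fin (n + 1) → Set X), (∀ i, D i ∈ OmegaAt x) → F n D ∈ D (Fin.last n))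
    {n : ℕ} {D : ℕ → Set X} (hD : ∀ i < n, D i ∈ OmegaAt x) :
    ∃ V ∈ 𝓝 x, ∀ p ∈ V, p ≠ x →
      ∃ E ∈ OmegaAt x, F n (fun i => Function.update D n E i.val) = p := by
  set N : Set X := {p | p ≠ x ∧
    ¬ ∃ E ∈ OmegaAt x, F n (fun i => Function.update D n E i.val) = p} with hN
  have hx : x ∉ closure N := by
    intro hc
    have hNO : N ∈ OmegaAt x := ⟨fun h => h.1 rfl, hc⟩
    have hmem := hF n (fun i => Function.update D n N i.val) (by
      intro i
      rcases Nat.lt_succ_iff_lt_or_eq.1 i.2 with hi | hi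
      · simpa [Function.update_of_ne hi.ne] using hD _ hi
      · simpa [hi] using hNO)
    simp only [Fin.val_last, Function.update_self] at hmem
    exact hmem.2 ⟨N, hNO, rfl⟩
  refine ⟨Nᶜ, ?_, ?_⟩
  · rwa [mem_closure_iff_frequently, Filter.not_frequently] at hx
  · intro p hp hpx
    by_contra hc
    exact hp ⟨hpx, hc⟩

/-- After a legal history of length `n`, some countable part of `A` projects to a set accumulating
at `y`, and each of its points `b` has a move `E b` of player I that the strategy answers by
`b.1`. -/
theorem exists_countable_piece {X Y : Type*} [TopologicalSpace X] [TopologicalSpace Y]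
    {x : X} {y : Y} {F : (n : ℕ) → (Fin (n + 1) → Set X) → X}
    (hF : ∀ (n : ℕ) (D : Fin (n + 1) → Set X), (∀ i, D i ∈ OmegaAt x) → F n D ∈ D (Fin.last n))
    (hY : CountablyTightAt Y y) {A : Set (X × Y)} (hA : (x, y) ∈ closure A)
    (hAx : ∀ a ∈ A, a.1 ≠ x) {n : ℕ} {D : ℕ → Set X} (hD : ∀ i < n, D i ∈ OmegaAt x) :
    ∃ (B : Set (X × Y)) (E : X × Y → Set X), B ⊆ A ∧ B.Countable ∧ y ∈ closure (Prod.snd '' B) ∧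
      ∀ b ∈ B, E b ∈ OmegaAt x ∧ F n (fun i => Function.update D n (E b) i.val) = b.1 := by
  obtain ⟨V, hV, hVF⟩ := exists_nhds_answers hF hD
  have hy : y ∈ closure (Prod.snd '' (A ∩ Prod.fst ⁻¹' V)) := by
    rw [mem_closure_iff_nhds]
    intro W hW
    obtain ⟨a, ⟨haV, haW⟩, haA⟩ := mem_closure_iff_nhds.1 hA _ (prod_mem_nhds hV hW)
    exact ⟨a.2, haW, a, ⟨haA, haV⟩, rfl⟩
  obtain ⟨C, hCA, hC, hyC⟩ := hY _ hy
  obtain ⟨B, hBA, hB⟩ := exists_subset_bijOn (A ∩ Prod.fst ⁻¹' V ∩ Prod.snd ⁻¹' C) Prod.snd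
  have himg : Prod.snd '' (A ∩ Prod.fst ⁻¹' V ∩ Prod.snd ⁻¹' C) = C := by
    rw [image_inter_preimage, inter_eq_right]
    exact hCA
  rw [himg] at hB
  have hans : ∀ b : X × Y, ∃ E, b ∈ B →
      E ∈ OmegaAt x ∧ F n (fun i => Function.update D n E i.val) = b.1 := by
    intro b
    by_cases hb : b ∈ B
    · obtain ⟨E, hE⟩ := hVF b.1 (hBA hb).1.2 (hAx b (hBA hb).1.1)
      exact ⟨E, fun _ => hE⟩
    · exact ⟨∅, fun h => absurd h hb⟩
  choose E hE using hans
  refine ⟨B, E, fun b hb => (hBA hb).1.1, ?_, ?_, hE⟩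
  · exact countable_of_injective_of_countable_image hB.injOn (hB.image_eq.symm ▸ hC)
  · rwa [hB.image_eq]

/-- The main case, in which `A` misses the fibre `{x} × Y`. -/
theorem exists_countable_of_avoids {X Y : Type*} [TopologicalSpace X] [TopologicalSpace Y]
    {x : X} {y : Y} (h : HasWinningStrategyII (OmegaAt x) (fun S => x ∈ closure S))
    (hY : CountablyTightAt Y y) {A : Set (X × Y)} (hA : (x, y) ∈ closure A)
    (hAx : ∀ a ∈ A, a.1 ≠ x) : ∃ B ⊆ A, B.Countable ∧ (x, y) ∈ closure B := by
  obtain ⟨F, hF, hwin⟩ := h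
  have key : ∀ (n : ℕ) (D : ℕ → Set X), ∃ (B : Set (X × Y)) (E : X × Y → Set X),
      B ⊆ A ∧ B.Countable ∧ ((∀ i < n, D i ∈ OmegaAt x) → y ∈ closure (Prod.snd '' B) ∧
        ∀ b ∈ B, E b ∈ OmegaAt x ∧ F n (fun i => Function.update D n (E b) i.val) = b.1) := by
    intro n D
    by_cases hD : ∀ i < n, D i ∈ OmegaAt x
    · obtain ⟨B, E, h1, h2, h3⟩ := exists_countable_piece hF hY hA hAx hD
      exact ⟨B, E, h1, h2, fun _ => h3⟩
    · exact ⟨∅, fun _ => ∅, empty_subset _, countable_empty, fun h => absurd h hD⟩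
  choose G E hGA hGc hG using key
  -- `T n` is the `n`-th level of the tree of histories.
  let T : ℕ → Set (ℕ → Set X) := fun n => Nat.rec {fun _ => ∅}
    (fun n S => ⋃ D ∈ S, (fun b => Function.update D n (E n D b)) '' G n D) n
  have hTc : ∀ n, (T n).Countable := by
    intro n
    induction n with
    | zero => exact countable_singleton _
    | succ n ih => exact ih.biUnion fun D _ => (hGc n D).image _
  have hTv : ∀ n, ∀ D ∈ T n, ∀ i < n, D i ∈ OmegaAt x := by
    intro n
    induction n with
    | zero => intro D _ i hi; omega
    | succ n ih =>
      intro D hD i hi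
      obtain ⟨D', hD', b, hb, rfl⟩ := mem_iUnion₂.1 hD
      rcases Nat.lt_succ_iff_lt_or_eq.1 hi with hi | rfl
      · simpa [Function.update_of_ne hi.ne] using ih D' hD' i hi
      · simpa using (((hG _ D') (ih D' hD')).2 b hb).1
  refine ⟨⋃ n, ⋃ D ∈ T n, G n D, ?_, ?_, ?_⟩
  · exact iUnion_subset fun n => iUnion₂_subset fun D _ => hGA n D
  · exact countable_iUnion fun n => (hTc n).biUnion fun D _ => hGc n D
  rw [mem_closure_iff_nhds]
  intro O hO
  obtain ⟨U, hU, W, hW, hUW⟩ := mem_nhds_prod_iff.1 hO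
  have hpick : ∀ n, ∀ D : T n, ∃ b ∈ G n D.1, b.2 ∈ W := by
    intro n D
    obtain ⟨_, hqW, b, hb, rfl⟩ :=
      mem_closure_iff_nhds.1 (hG n D.1 (hTv n D.1 D.2)).1 W hW
    exact ⟨b, hb, hqW⟩
  choose b hbG hbW using hpick
  -- The branch of the tree following the choices `b`.
  let s : (n : ℕ) → T n := fun n => Nat.rec ⟨fun _ => ∅, rfl⟩
    (fun n D => ⟨Function.update D.1 n (E n D.1 (b n D)),
      mem_iUnion₂.2 ⟨D.1, D.2, b n D, hbG n D, rfl⟩⟩) n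
  have hs : ∀ n, (s (n + 1)).1 = Function.update (s n).1 n (E n (s n).1 (b n (s n))) :=
    fun n => rfl
  have hstab : ∀ m i, i < m → (s m).1 i = (s (i + 1)).1 i := by
    intro m
    induction m with
    | zero => intro i hi; omega
    | succ m ih =>
      intro i hi
      rcases Nat.lt_succ_iff_lt_or_eq.1 hi with hi | rfl
      · rw [hs m, Function.update_of_ne hi.ne, ih i hi]
      · rfl
  have hplay : ∀ n, F n (fun i => (s (i.val + 1)).1 i.val) = (b n (s n)).1 := by
    intro n
    rw [← ((hG n _ (hTv n _ (s n).2)).2 _ (hbG n (s n))).2, ← hs n]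
    congr 1
    funext i
    exact (hstab (n + 1) i i.2).symm
  have hx := hwin (fun n => (s (n + 1)).1 n) fun n => hTv (n + 1) _ (s (n + 1)).2 n n.lt_succ_self
  obtain ⟨p, hpU, n, hp⟩ := mem_closure_iff_nhds.1 hx U hU
  have hp' : p = (b n (s n)).1 := hp.trans (hplay n)
  exact ⟨b n (s n), hUW ⟨hp' ▸ hpU, hbW n (s n)⟩,
    mem_iUnion.2 ⟨n, mem_iUnion₂.2 ⟨(s n).1, (s n).2, hbG n (s n)⟩⟩⟩

/-- if `X` is Tychonoff and player II has a winning strategy in `G₁(Ω_x, Ω_x)`,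
then `X` is productively countably tight at `x`: for every space `Y` with countable tightness
at a point `y`, the product `X × Y` has countable tightness at `⟨x, y⟩`. -/
theorem statement2 {X : Type*} [TopologicalSpace X] [CompletelyRegularSpace X] [T2Space X]
    (x : X)
    (h : HasWinningStrategyII (OmegaAt x) (fun S => x ∈ closure S)) :
    ∀ (Y : Type*) [TopologicalSpace Y] (y : Y),
      CountablyTightAt Y y → CountablyTightAt (X × Y) (x, y) := by
  intro Y _ y hY A hA
  have hsplit : A = {a ∈ A | a.1 ≠ x} ∪ {a ∈ A | a.1 = x} := by
    ext a
    by_cases ha : a.1 = x <;> simp [ha]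
  rw [hsplit, closure_union] at hA
  rcases hA with hA | hA
  · obtain ⟨B, hBA, hB⟩ := exists_countable_of_avoids h hY hA fun a ha => ha.2
    exact ⟨B, fun b hb => (hBA hb).1, hB⟩
  · have hy : y ∈ closure {q | (x, q) ∈ A} := by
      rw [mem_closure_iff_nhds]
      intro W hW
      obtain ⟨⟨p, q⟩, haW, haA, hax⟩ :=
        mem_closure_iff_nhds.1 hA _ (prod_mem_nhds Filter.univ_mem hW)
      obtain rfl : p = x := hax
      exact ⟨q, haW.2, haA⟩
    obtain ⟨C, hCA, hC, hyC⟩ := hY _ hy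
    refine ⟨Prod.mk x '' C, image_subset_iff.2 hCA, hC.image _, ?_⟩
    exact image_closure_subset_closure_image (Continuous.prodMk_right x) ⟨y, hyC, rfl⟩
end

section
/- Let X be a topological space and p ∈ X. If the product X × S_𝔠 has countable tightness at the point ⟨p, 0⟩, then S1(Ω_p, Ω_p) holds, that is, X has countable strong fan tightness at p. -/
/-!
By countable tightness, each `A n` may be replaced by a countable subset `{e n j : j ∈ ℕ}` that
still has `p` in its closure; a selection is then a function `α : ℕ → ℕ`, and the spines of the fan
can be indexed by the selections, as there are `𝔠` of them.

Attach to each `α` the infinite set of codes `branchCode α n` of its initial segments `α|n`. These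
sets are almost disjoint. Consider the points `(e m (α m), (α, n))` with `m = branchCode α n`. The
point `(p, 0)` is in their closure: given a neighbourhood `U` of `p`, some `α` has `e m (α m) ∈ U`
for all `m`. So countably many of these points accumulate at `(p, 0)`; they involve only countably
many `α`, hence (`exists_separating`) there is `f` such that the sets
`{branchCode α n : n ≥ f α}` for these `α` are pairwise disjoint. This allows a single selection
`a` to satisfy `a m = e m (α m)` for all such `α` and all `m = branchCode α n` with `n ≥ f α`.
If `p` were not in the closure of the range of `a`, the complement of that closure times the
neighbourhood of `0` given by `f` would be a neighbourhood of `(p, 0)` missing all of the countably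
many points.
-/

open Set Topology

/-- The sequential fan `S_𝔠` with `𝔠` many spines: underlying set `(ℝ × ω) ∪ {0}`, where
`none` plays the role of the extra point `0`. -/
def SeqFan : Type := Option (ℝ × ℕ)

/-- The topology of the sequential fan: every point of `ℝ × ω` is isolated, and a set `U`
containing `0` is open iff there is `f : ℝ → ω` with `⟨α, n⟩ ∈ U` whenever `n ≥ f α`. -/
instance : TopologicalSpace SeqFan where
  IsOpen U := none ∈ U → ∃ f : ℝ → ℕ, ∀ (a : ℝ) (n : ℕ), f a ≤ n → some (a, n) ∈ U
  isOpen_univ := fun _ => ⟨fun _ => 0, fun _ _ _ => trivial⟩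
  isOpen_inter := by
    rintro U V hU hV h
    obtain ⟨f, hf⟩ := hU h.1
    obtain ⟨g, hg⟩ := hV h.2
    exact ⟨fun a => max (f a) (g a), fun a n hn =>
      ⟨hf a n (le_trans (le_max_left _ _) hn), hg a n (le_trans (le_max_right _ _) hn)⟩⟩
  isOpen_sUnion := by
    rintro S hS ⟨U, hUS, hU⟩
    obtain ⟨f, hf⟩ := hS U hUS hU
    exact ⟨f, fun a n hn => ⟨U, hUS, hf a n hn⟩⟩

/-- The code of the initial segment `α|n`, as a natural number. -/
def branchCode (α : ℕ → ℕ) (n : ℕ) : ℕ := Encodable.encode ((List.range n).map α)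

theorem branchCode_eq {α β : ℕ → ℕ} {n k : ℕ} (h : branchCode α n = branchCode β k) :
    n = k ∧ ∀ i < n, α i = β i := by
  have h1 := Encodable.encode_injective h
  have h2 : n = k := by simpa using congrArg List.length h1
  subst h2
  refine ⟨rfl, fun i hi => ?_⟩
  exact List.map_inj_left.1 h1 i (List.mem_range.2 hi)

/-- Countably many branches can be made disjoint by discarding an initial segment of each. -/
theorem exists_separating {K : Set (ℕ → ℕ)} (hK : K.Countable) :
    ∃ f : (ℕ → ℕ) → ℕ, ∀ α ∈ K, ∀ β ∈ K, ∀ n, f α ≤ n → f β ≤ n →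
      (∀ i < n, α i = β i) → α = β := by
  obtain ⟨κ, hκ⟩ := Set.countable_iff_exists_injOn.1 hK
  -- `f α` bounds the places where `α` first differs from the finitely many earlier branches.
  have key : ∀ α : ℕ → ℕ, ∃ N : ℕ, ∀ β ∈ K, κ β < κ α → ∃ i < N, α i ≠ β i := by
    intro α
    have hfin : {β | β ∈ K ∧ κ β < κ α}.Finite := by
      refine Set.Finite.of_finite_image ((Set.finite_Iio (κ α)).subset ?_)
        (hκ.mono fun β hβ => hβ.1)
      rintro _ ⟨β, hβ, rfl⟩
      exact hβ.2
    have hd : ∀ β : ℕ → ℕ, ∃ i, κ β < κ α → α i ≠ β i := by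
      intro β
      by_cases hlt : κ β < κ α
      · have hne : α ≠ β := by
          rintro rfl
          exact lt_irrefl _ hlt
        obtain ⟨i, hi⟩ := Function.ne_iff.1 hne
        exact ⟨i, fun _ => hi⟩
      · exact ⟨0, fun h => absurd h hlt⟩
    choose d hd using hd
    obtain ⟨M, hM⟩ := (hfin.image d).bddAbove
    exact ⟨M + 1, fun β hβ hlt =>
      ⟨d β, Nat.lt_succ_of_le (hM ⟨β, ⟨hβ, hlt⟩, rfl⟩), hd β hlt⟩⟩
  choose f hf using key
  refine ⟨f, fun α hα β hβ n hn hn' hag => ?_⟩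
  rcases lt_trichotomy (κ α) (κ β) with hlt | heq | hlt
  · obtain ⟨i, hi, hne⟩ := hf β α hα hlt
    exact absurd (hag i (by omega)).symm hne
  · exact hκ hα hβ heq
  · obtain ⟨i, hi, hne⟩ := hf α β hβ hlt
    exact absurd (hag i (by omega)) hne

/-- The basic neighbourhood of `0` given by `g` is open in the fan. -/
theorem isOpen_fanNhd (g : ℝ → ℕ) :
    IsOpen (X := SeqFan) {z | ∀ r n, z = some (r, n) → g r ≤ n} := by
  intro _
  refine ⟨g, fun r n hn r' n' h => ?_⟩
  cases h
  exact hn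

theorem exists_countable_of_prod {X : Type*} [TopologicalSpace X] {p : X}
    (h : CountablyTightAt (X × SeqFan) (p, none)) {A : Set X} (hA : p ∈ closure A) :
    ∃ e : ℕ → X, (∀ j, e j ∈ A) ∧ p ∈ closure (Set.range e) := by
  have h1 : ((p, none) : X × SeqFan) ∈ closure (A ×ˢ {(none : SeqFan)}) := by
    rw [closure_prod_eq]
    exact ⟨hA, subset_closure rfl⟩
  obtain ⟨B, hBA, hBc, hB⟩ := h _ h1
  have hne : B.Nonempty := closure_nonempty_iff.1 ⟨_, hB⟩
  obtain ⟨b, rfl⟩ := hBc.exists_eq_range hne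
  refine ⟨fun j => (b j).1, fun j => (hBA ⟨j, rfl⟩).1, ?_⟩
  have := image_closure_subset_closure_image (f := (Prod.fst : X × SeqFan → X))
    continuous_fst ⟨_, hB, rfl⟩
  rw [← Set.range_comp] at this
  exact this

/-- if `X × S_𝔠` has countable tightness at `⟨p, 0⟩`, then `S₁(Ω_p, Ω_p)` holds,
i.e. `X` has countable strong fan tightness at `p`. -/
theorem statement6 {X : Type*} [TopologicalSpace X] (p : X)
    (h : CountablyTightAt (X × SeqFan) (p, none)) :
    ∀ A : ℕ → Set X, (∀ n, A n ∈ OmegaAt p) →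
      ∃ a : ℕ → X, (∀ n, a n ∈ A n) ∧ p ∈ closure (Set.range a) := by
  classical
  intro A hA
  choose e heA hep using fun n => exists_countable_of_prod h (hA n).2
  obtain ⟨ι⟩ : Nonempty ((ℕ → ℕ) ≃ ℝ) := by
    rw [← Cardinal.eq, Cardinal.mk_real]
    simp
  let P : (ℕ → ℕ) → ℕ → X × SeqFan := fun α n =>
    (e (branchCode α n) (α (branchCode α n)), some (ι α, n))
  have hcl : ((p, none) : X × SeqFan) ∈ closure {z | ∃ α n, z = P α n} := by
    rw [mem_closure_iff_nhds]
    intro W hW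
    obtain ⟨U, hU, V, hV, hUV⟩ := mem_nhds_prod_iff.1 hW
    obtain ⟨V', hV'V, hV'o, hV'⟩ := mem_nhds_iff.1 hV
    obtain ⟨g, hg⟩ := hV'o hV'
    have hsel : ∀ m, ∃ j, e m j ∈ U := by
      intro m
      obtain ⟨_, hxU, j, rfl⟩ := mem_closure_iff_nhds.1 (hep m) U hU
      exact ⟨j, hxU⟩
    choose α hα using hsel
    exact ⟨P α (g (ι α)), hUV ⟨hα _, hV'V (hg _ _ le_rfl)⟩, α, _, rfl⟩
  obtain ⟨B, hBA, hBc, hB⟩ := h _ hcl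
  let K : Set (ℕ → ℕ) := {α | ∃ n, P α n ∈ B}
  have hK : K.Countable := by
    -- The spine of a point of `B` recovers `α`.
    let π : X × SeqFan → (ℕ → ℕ) := fun z =>
      ι.symm ((show Option (ℝ × ℕ) from z.2).elim 0 Prod.fst)
    refine (hBc.image π).mono ?_
    rintro α ⟨n, hn⟩
    exact ⟨_, hn, ι.symm_apply_apply α⟩
  obtain ⟨f, hf⟩ := exists_separating hK
  have hsel : ∀ m, ∃ j, ∀ α ∈ K, ∀ n, f α ≤ n → m = branchCode α n → j = α m := by
    intro m
    by_cases hm : ∃ β ∈ K, ∃ n, f β ≤ n ∧ m = branchCode β n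
    · obtain ⟨β, hβ, n, hn, rfl⟩ := hm
      refine ⟨β (branchCode β n), fun α hα k hk hc => ?_⟩
      obtain ⟨rfl, hag⟩ := branchCode_eq hc
      rw [hf β hβ α hα n hn hk hag]
    · exact ⟨0, fun α hα n hn hc => absurd ⟨α, hα, n, hn, hc⟩ hm⟩
  choose s hs using hsel
  refine ⟨fun m => e m (s m), fun m => heA _ _, ?_⟩
  by_contra hp
  have hopen := (isClosed_closure (s := Set.range fun m => e m (s m))).isOpen_compl.prod
    (isOpen_fanNhd fun r => f (ι.symm r))
  have hmem : ((p, none) : X × SeqFan) ∈ (closure (Set.range fun m => e m (s m)))ᶜ ×ˢ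
      {z : SeqFan | ∀ r n, z = some (r, n) → f (ι.symm r) ≤ n} :=
    ⟨hp, fun r n hrn => by cases hrn⟩
  obtain ⟨z, ⟨hz1, hz2⟩, hzB⟩ := mem_closure_iff.1 hB _ hopen hmem
  obtain ⟨α, n, rfl⟩ := hBA hzB
  have hn : f α ≤ n := by simpa using hz2 (ι α) n rfl
  refine hz1 (subset_closure ⟨branchCode α n, ?_⟩)
  have := hs (branchCode α n) α ⟨n, hzB⟩ n hn rfl
  simp only [this, P]
end

section
/- If a topological space X is productively countably tight, then S1(Ω_x, Ω_x) holds for every point x ∈ X. -/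
/-!
The test space is the sequential fan `Y` with continuum many spines, indexed by `h : ℕ → ℕ`; it is
countably tight because a set accumulating at the apex meets some single spine in an infinite set.

By countable tightness of `X`, each `A n` may be replaced by a countable set `{e n i : i ∈ ℕ}`
with `x` in its closure. The sets `{code h m : m ∈ ℕ}`, where `code h m` is a number coding the
restriction of `h` to `{0, …, m - 1}`, are almost disjoint for different `h`. In `X × Y` consider
all points `(e n (h n), (h, m))` with `n = code h m`. The point `(x, ∞)` is in their closure:
given `U ∋ x`, some `h` has `e n (h n) ∈ U` for every `n`. Hence it is in the closure of countably
many of them, which involve only countably many spines. By almost disjointness a single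
`g : ℕ → ℕ` agrees with each such `h` at almost all `code h m` (`exists_diagonal`), and then
`n ↦ e n (g n)` is the required selection.
-/

open Set Topology

universe u v

/-- The number coding the first `m` values of `h`. -/
def code (h : ℕ → ℕ) (m : ℕ) : ℕ := Encodable.encode ((List.range m).map h)

lemma code_inj {h h' : ℕ → ℕ} {m m' : ℕ} (H : code h m = code h' m') :
    m = m' ∧ ∀ i < m, h i = h' i := by
  have H1 := Encodable.encode_injective H
  have hm : m = m' := by simpa using congrArg List.length H1
  subst hm
  refine ⟨rfl, fun i hi => ?_⟩
  simpa using List.map_inj_left.1 H1 i (by simpa using hi)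

/-- The ranges of `code h` are almost disjoint, so countably many functions `h` can be glued along
them up to finitely many places on each. -/
lemma exists_diagonal (H : Set (ℕ → ℕ)) (hH : H.Countable) :
    ∃ g : ℕ → ℕ, ∀ h ∈ H, ∃ M, ∀ m ≥ M, g (code h m) = h (code h m) := by
  classical
  rcases H.eq_empty_or_nonempty with rfl | hne
  · exact ⟨id, by simp⟩
  obtain ⟨f, rfl⟩ := hH.exists_eq_range hne
  refine ⟨fun n => if hn : ∃ k m, n = code (f k) m then f (Nat.find hn) n else 0, ?_⟩
  rintro _ ⟨k, rfl⟩
  have key : ∀ j, ∃ i, f j ≠ f k → f j i ≠ f k i := by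
    intro j
    by_cases hj : f j = f k
    · exact ⟨0, fun h => (h hj).elim⟩
    · obtain ⟨i, hi⟩ := Function.ne_iff.1 hj
      exact ⟨i, fun _ => hi⟩
  choose d hd using key
  refine ⟨(Finset.range (k + 1)).sup d + 1, fun m hm => ?_⟩
  have hn : ∃ k' m', code (f k) m = code (f k') m' := ⟨k, m, rfl⟩
  simp only [dif_pos hn]
  have hle : Nat.find hn ≤ k := Nat.find_min' hn ⟨m, rfl⟩
  obtain ⟨m', hm'⟩ := Nat.find_spec hn
  have hdk : d (Nat.find hn) ≤ (Finset.range (k + 1)).sup d :=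
    Finset.le_sup (f := d) (Finset.mem_range.2 (by omega))
  have heq : f (Nat.find hn) = f k := by
    by_contra hne
    exact hd _ hne ((code_inj hm').2 _ (by omega)).symm
  rw [heq]

/-- The sequential fan with spines indexed by `ℕ → ℕ`: isolated points `pt h m` and an apex. It is
defined in an arbitrary universe. -/
inductive Fan : Type u
  | apex : Fan
  | pt (h : ℕ → ℕ) (m : ℕ) : Fan

/-- A set containing the apex is open iff it contains almost all of each spine. -/
instance : TopologicalSpace Fan.{u} where
  IsOpen V := Fan.apex ∈ V → ∀ h, ∃ M, ∀ m ≥ M, Fan.pt h m ∈ V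
  isOpen_univ := fun _ _ => ⟨0, fun _ _ => mem_univ _⟩
  isOpen_inter := by
    rintro s t hs ht ⟨h1, h2⟩ h
    obtain ⟨M, hM⟩ := hs h1 h
    obtain ⟨N, hN⟩ := ht h2 h
    exact ⟨max M N, fun m hm => ⟨hM m (le_of_max_le_left hm), hN m (le_of_max_le_right hm)⟩⟩
  isOpen_sUnion := by
    rintro S hS ⟨s, hs, has⟩ h
    obtain ⟨M, hM⟩ := hS s hs has h
    exact ⟨M, fun m hm => ⟨s, hs, hM m hm⟩⟩

lemma Fan.isOpen_iff {V : Set Fan.{u}} :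
    IsOpen V ↔ (Fan.apex ∈ V → ∀ h, ∃ M, ∀ m ≥ M, Fan.pt h m ∈ V) := Iff.rfl

lemma Fan.countablyTightAt (y : Fan.{u}) : CountablyTightAt Fan.{u} y := by
  intro A hA
  by_cases hy : y ∈ A
  · exact ⟨{y}, by simpa using hy, countable_singleton y, subset_closure rfl⟩
  cases y with
  | pt h m =>
    obtain ⟨z, hz, hzA⟩ := mem_closure_iff.1 hA {Fan.pt h m}
      (Fan.isOpen_iff.2 fun h => by simp at h) rfl
    rw [mem_singleton_iff.1 hz] at hzA
    exact (hy hzA).elim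
  | apex =>
    have key : ∃ h, ∀ M, ∃ m ≥ M, Fan.pt h m ∈ A := by
      by_contra! hcon
      obtain ⟨z, hz, hzA⟩ := mem_closure_iff.1 hA Aᶜ (Fan.isOpen_iff.2 fun _ => hcon) hy
      exact hz hzA
    obtain ⟨h, hh⟩ := key
    refine ⟨A ∩ range (Fan.pt h), inter_subset_left,
      (countable_range _).mono inter_subset_right, mem_closure_iff.2 fun V hV hVa => ?_⟩
    obtain ⟨M, hM⟩ := Fan.isOpen_iff.1 hV hVa h
    obtain ⟨m, hm, hmA⟩ := hh M
    exact ⟨_, hM m hm, hmA, m, rfl⟩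

lemma countablyTightAt_of_prod_punit {X : Type v} [TopologicalSpace X] (x : X)
    (h : CountablyTightAt (X × PUnit.{u + 1}) (x, PUnit.unit)) : CountablyTightAt X x := by
  intro A hA
  obtain ⟨B, hBA, hB, hxB⟩ := h (A ×ˢ univ) (by
    rw [closure_prod_eq]
    exact ⟨hA, subset_closure (mem_univ _)⟩)
  refine ⟨Prod.fst '' B, ?_, hB.image _, ?_⟩
  · rintro _ ⟨p, hp, rfl⟩
    exact (hBA hp).1
  · exact image_closure_subset_closure_image continuous_fst ⟨_, hxB, rfl⟩

/-- if `X` is productively countably tight (i.e. `X × Y` is countably tight for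
every countably tight space `Y`), then `S₁(Ω_x, Ω_x)` holds for every point `x ∈ X`. -/
theorem statement7 {X : Type*} [TopologicalSpace X]
    (h : ∀ (Y : Type*) [TopologicalSpace Y], (∀ y : Y, CountablyTightAt Y y) →
      ∀ z : X × Y, CountablyTightAt (X × Y) z) :
    ∀ x : X, ∀ A : ℕ → Set X, (∀ n, A n ∈ OmegaAt x) →
      ∃ a : ℕ → X, (∀ n, a n ∈ A n) ∧ x ∈ closure (Set.range a) := by
  intro x A hA
  have hX : CountablyTightAt X x := countablyTightAt_of_prod_punit x
    (h PUnit (fun y B hB => ⟨B, Subset.rfl, B.to_countable, hB⟩) _)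
  have hE : ∀ n, ∃ e : ℕ → X, (∀ i, e i ∈ A n) ∧ x ∈ closure (range e) := by
    intro n
    obtain ⟨B, hBA, hB, hxB⟩ := hX (A n) (hA n).2
    obtain ⟨e, rfl⟩ := hB.exists_eq_range (closure_nonempty_iff.1 ⟨x, hxB⟩)
    exact ⟨e, fun i => hBA ⟨i, rfl⟩, hxB⟩
  choose e heA hxe using hE
  let p : (ℕ → ℕ) × ℕ → X × Fan := fun q =>
    (e (code q.1 q.2) (q.1 (code q.1 q.2)), Fan.pt q.1 q.2)
  have hcl : (x, Fan.apex) ∈ closure (range p) := by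
    rw [mem_closure_iff_nhds]
    intro T hT
    obtain ⟨U, hU, V, hV, hUV⟩ := mem_nhds_prod_iff.1 hT
    obtain ⟨V', hV'V, hV', haV'⟩ := mem_nhds_iff.1 hV
    have hsel : ∀ n, ∃ i, e n i ∈ U := by
      intro n
      obtain ⟨_, hzU, i, rfl⟩ := mem_closure_iff_nhds.1 (hxe n) U hU
      exact ⟨i, hzU⟩
    choose s hs using hsel
    obtain ⟨M, hM⟩ := Fan.isOpen_iff.1 hV' haV' s
    exact ⟨p (s, M), hUV ⟨hs _, hV'V (hM M le_rfl)⟩, _, rfl⟩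
  obtain ⟨C, hCp, hC, hxC⟩ := h Fan Fan.countablyTightAt (x, Fan.apex) _ hcl
  obtain ⟨Q, hQ, rfl⟩ : ∃ Q : Set ((ℕ → ℕ) × ℕ), Q.Countable ∧ p '' Q = C := by
    obtain ⟨Q, hQ⟩ := subset_range_iff_exists_image_eq.1 hCp
    refine ⟨Q, ?_, hQ⟩
    have hp : Function.Injective p := by
      rintro ⟨h1, m1⟩ ⟨h2, m2⟩ h12
      have := congrArg Prod.snd h12
      simp only [p, Fan.pt.injEq] at this
      simp [this]
    rw [← hQ] at hC
    exact countable_of_injective_of_countable_image hp.injOn hC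
  obtain ⟨g, hg⟩ := exists_diagonal (Prod.fst '' Q) (hQ.image _)
  refine ⟨fun n => e n (g n), fun n => heA _ _, mem_closure_iff.2 fun W hW hxW => ?_⟩
  -- On the spines occurring in `Q`, keep only the points where `g` agrees with the spine.
  let V : Set Fan := {y | ∀ s m, y = Fan.pt s m → s ∈ Prod.fst '' Q →
    g (code s m) = s (code s m)}
  have hV : IsOpen V := by
    refine Fan.isOpen_iff.2 fun _ s => ?_
    by_cases hs : s ∈ Prod.fst '' Q
    · obtain ⟨M, hM⟩ := hg s hs
      refine ⟨M, fun m hm s' m' hsm _ => ?_⟩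
      obtain ⟨rfl, rfl⟩ := Fan.pt.inj hsm
      exact hM m hm
    · refine ⟨0, fun m _ s' m' hsm hs' => ?_⟩
      obtain ⟨rfl, rfl⟩ := Fan.pt.inj hsm
      exact (hs hs').elim
  obtain ⟨_, ⟨hqW, hqV⟩, q, hq, rfl⟩ := mem_closure_iff.1 hxC (W ×ˢ V) (hW.prod hV)
    ⟨hxW, fun s m hsm => by cases hsm⟩
  refine ⟨_, hqW, code q.1 q.2, ?_⟩
  simp only [p]
  rw [hqV q.1 q.2 rfl ⟨q, hq, rfl⟩]
end

section
/- Let X be a Tychonoff space. If player II has a winning strategy in the game G1(𝒪, 𝒪) played on X, then player II has a winning strategy in the game G1(Ω_0, Ω_0) played on C_p(X), where 0 is the constantly zero function. -/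
/-!
The proof plays the Rothberger game and the game on `C_p(X)` through an intermediate point-open game.

Galvin's duality: at any position of the Rothberger game there is a point `x` such that every open
`V ∋ x` is the answer of player II's strategy to some open cover. Otherwise each `x` has an open
neighbourhood `V x` that is never an answer, and the answer to the cover `{V x | x ∈ X}` is a
contradiction. Iterating this gives `exists_pointOpen_strategy`: a map `σ` sending each finite
sequence of open sets to a point, such that `⋃ V n = X` whenever every `V n` is an open neighbourhood
of `σ (V 0, …, V (n - 1))`.

In the game on `C_p(X)`, player II follows all subsequences at once. After `n` innings, with
`U k = {x | |f k x| < 1 / (k + 1)}` for the selected functions `f k`, the point `σ l` is computed for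
each of the finitely many subsequences `l` of `(U 0, …, U (n - 1))`, and `f n` is chosen in the
current set with `|f n| < 1 / (n + 1)` at all these points. Then every subsequence of `U` is a legal
run against `σ`, hence covers `X`; so each point lies in all but finitely many `U n`, and `f n`
converges pointwise to `0`.
-/

open Set Topology

/-- The collection of open covers of `X`. -/
def OpenCovers (X : Type*) [TopologicalSpace X] : Set (Set (Set X)) :=
  {𝒰 | (∀ U ∈ 𝒰, IsOpen U) ∧ ⋃₀ 𝒰 = Set.univ}

/-- `C_p(X)`: the continuous real-valued functions on `X` with the topology of pointwise
convergence (the subspace topology inherited from the product `ℝ^X`). -/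
abbrev Cp (X : Type*) [TopologicalSpace X] : Type _ := {f : X → ℝ // Continuous f}

/-- The constantly zero function, as a point of `C_p(X)`. -/
def cpZero (X : Type*) [TopologicalSpace X] : Cp X := ⟨fun _ => (0 : ℝ), continuous_const⟩

/-- The first `n` terms of a sequence, most recent first. -/
def revHist {β : Type*} (V : ℕ → β) : ℕ → List β
  | 0 => []
  | n + 1 => V n :: revHist V n

lemma length_revHist {β : Type*} (V : ℕ → β) (n : ℕ) : (revHist V n).length = n := by
  induction n with
  | zero => rfl
  | succ n ih => simp [revHist, ih]

/-- Galvin's lemma: at every position of the Rothberger game there is a point all of whose open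
neighbourhoods are answers of the given strategy `F`. The position is given by the first `n` terms of
`D`, and `c V` is a cover answered by `V`. -/
lemma exists_galvin_point {X : Type*} [TopologicalSpace X]
    (F : (n : ℕ) → (Fin (n + 1) → Set (Set X)) → Set X)
    (hF : ∀ (n : ℕ) (D : Fin (n + 1) → Set (Set X)), (∀ i, D i ∈ OpenCovers X) →
      F n D ∈ D (Fin.last n))
    (n : ℕ) (D : ℕ → Set (Set X)) (hD : ∀ i, D i ∈ OpenCovers X) :
    ∃ (x : X) (c : Set X → Set (Set X)), ∀ V, c V ∈ OpenCovers X ∧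
      (IsOpen V → x ∈ V → F n (fun i => Function.update D n (c V) i.val) = V) := by
  have hup : ∀ c ∈ OpenCovers X, ∀ i, Function.update D n c i ∈ OpenCovers X := by
    intro c hc i
    by_cases h : i = n
    · subst h; simpa using hc
    · simpa [h] using hD i
  have key : ∃ x : X, ∀ V, IsOpen V → x ∈ V → ∃ c ∈ OpenCovers X,
      F n (fun i => Function.update D n c i.val) = V := by
    by_contra! hcon
    choose V hVo hxV hV using hcon
    have hc : range V ∈ OpenCovers X := by
      refine ⟨?_, ?_⟩
      · rintro _ ⟨x, rfl⟩; exact hVo x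
      · exact eq_univ_of_forall fun x => ⟨V x, ⟨x, rfl⟩, hxV x⟩
    have hm := hF n (fun i => Function.update D n (range V) i.val) (fun i => hup _ hc _)
    simp only [Fin.val_last, Function.update_self] at hm
    obtain ⟨x, hx⟩ := hm
    exact hV x _ hc hx.symm
  obtain ⟨x, hx⟩ := key
  have hx' : ∀ V : Set X, ∃ c, c ∈ OpenCovers X ∧
      (IsOpen V → x ∈ V → F n (fun i => Function.update D n c i.val) = V) := by
    intro V
    by_cases h : IsOpen V ∧ x ∈ V
    · obtain ⟨c, hc, h'⟩ := hx V h.1 h.2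
      exact ⟨c, hc, fun _ _ => h'⟩
    · exact ⟨D 0, hD 0, fun h1 h2 => absurd ⟨h1, h2⟩ h⟩
  choose c hc using hx'
  exact ⟨x, c, hc⟩

/-- A winning strategy for II in the Rothberger game yields a winning strategy `σ` for I in the
point-open game; the argument of `σ` lists the previous open sets, most recent first. -/
lemma exists_pointOpen_strategy {X : Type*} [TopologicalSpace X]
    (h : HasWinningStrategyII (OpenCovers X) (fun 𝒮 => ⋃₀ 𝒮 = Set.univ)) :
    ∃ σ : List (Set X) → X, ∀ V : ℕ → Set X,
      (∀ n, IsOpen (V n)) → (∀ n, σ (revHist V n) ∈ V n) → ∀ x, ∃ n, x ∈ V n := by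
  obtain ⟨F, hF, hwin⟩ := h
  have g := fun (n : ℕ) (D : ℕ → OpenCovers X) =>
    exists_galvin_point F hF n (fun i => (D i : Set (Set X))) (fun i => (D i).2)
  choose x c hc using g
  -- `H l` is a sequence of covers whose first `l.length` terms are answered by the entries of `l`.
  let H : List (Set X) → ℕ → OpenCovers X := fun l =>
    List.rec (motive := fun _ => ℕ → OpenCovers X)
      (fun _ => ⟨{univ}, by simp [OpenCovers]⟩)
      (fun V t D => Function.update D t.length ⟨c t.length D V, (hc t.length D V).1⟩) l
  have Hcons : ∀ V t, H (V :: t) =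
      Function.update (H t) t.length ⟨c t.length (H t) V, (hc t.length (H t) V).1⟩ :=
    fun _ _ => rfl
  refine ⟨fun l => x l.length (H l), fun V hVo hV y => ?_⟩
  let D : ℕ → OpenCovers X := fun n => H (revHist V (n + 1)) n
  have hstab : ∀ m i, i < m → H (revHist V m) i = D i := by
    intro m
    induction m with
    | zero => intro i hi; omega
    | succ m ih =>
      intro i hi
      rcases Nat.lt_succ_iff_lt_or_eq.mp hi with h | h
      · rw [← ih i h, revHist, Hcons, length_revHist, Function.update_of_ne h.ne]
      · subst h; rfl
  have hans : ∀ n, F n (fun i => (D i.val).1) = V n := by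
    intro n
    have hn := hV n
    simp only [length_revHist] at hn
    have h1 := (hc n (H (revHist V n)) (V n)).2 (hVo n) hn
    rw [← h1]
    congr 1
    funext i
    have h2 := hstab (n + 1) i.val i.isLt
    rw [← h2, revHist, Hcons, length_revHist]
    by_cases hi : i.val = n
    · rw [hi]
      simp only [Function.update_self]
    · simp only [Function.update_of_ne hi]
  have hU := hwin (fun n => (D n).1) (fun n => (D n).2)
  have hy : y ∈ ⋃₀ {z | ∃ n : ℕ, z = F n fun i => (D i.val).1} := by
    rw [hU]; trivial
  obtain ⟨_, ⟨n, rfl⟩, hyn⟩ := hy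
  exact ⟨n, hans n ▸ hyn⟩

/-- The open set of points at which `f` is smaller than `1 / (n + 1)` in absolute value. -/
def smallSet {X : Type*} [TopologicalSpace X] (n : ℕ) (f : Cp X) : Set X :=
  {x | |f.1 x| < 1 / ((n : ℝ) + 1)}

lemma isOpen_smallSet {X : Type*} [TopologicalSpace X] (n : ℕ) (f : Cp X) :
    IsOpen (smallSet n f) :=
  isOpen_lt f.2.abs continuous_const

lemma exists_mem_smallSet {X : Type*} [TopologicalSpace X] (n : ℕ) {P : Set X} (hP : P.Finite)
    {A : Set (Cp X)} (hA : A ∈ OmegaAt (cpZero X)) : ∃ f ∈ A, P ⊆ smallSet n f := by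
  have hopen : IsOpen {f : Cp X | P ⊆ smallSet n f} := by
    have : {f : Cp X | P ⊆ smallSet n f} = ⋂ x ∈ P, {f | |f.1 x| < 1 / ((n : ℝ) + 1)} := by
      ext f; simp [subset_def, smallSet]
    rw [this]
    exact hP.isOpen_biInter fun x _ =>
      isOpen_lt ((continuous_apply x).comp continuous_subtype_val).abs continuous_const
  have hz : cpZero X ∈ {f : Cp X | P ⊆ smallSet n f} := by
    intro x _
    simp only [smallSet, cpZero, mem_ofPred_eq, abs_zero]
    positivity
  obtain ⟨f, hf, hfA⟩ := mem_closure_iff.mp hA.2 _ hopen hz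
  exact ⟨f, hfA, hf⟩

/-- The subsequences of `(U 0, …, U (n - 1))` (as lists, most recent first), where `U k` is the
`smallSet` of the function that `pick` selects from the `k`-th move, given the subsequences available
before it. -/
def subHist {X : Type*} [TopologicalSpace X]
    (pick : ℕ → Set (List (Set X)) → Set (Cp X) → Cp X) :
    (n : ℕ) → (Fin n → Set (Cp X)) → Set (List (Set X))
  | 0, _ => {[]}
  | n + 1, D =>
    subHist pick n (Fin.init D) ∪
      List.cons (smallSet n (pick n (subHist pick n (Fin.init D)) (D (Fin.last n)))) ''
        subHist pick n (Fin.init D)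

lemma finite_subHist {X : Type*} [TopologicalSpace X]
    (pick : ℕ → Set (List (Set X)) → Set (Cp X) → Cp X) (n : ℕ) (D : Fin n → Set (Cp X)) :
    (subHist pick n D).Finite := by
  induction n with
  | zero => exact finite_singleton _
  | succ n ih => exact (ih _).union ((ih _).image _)

/-- if `X` is Tychonoff and player II has a winning strategy in the Rothberger
game `G₁(𝒪, 𝒪)` played on `X`, then player II has a winning strategy in `G₁(Ω_𝟎, Ω_𝟎)`
played on `C_p(X)`, where `𝟎` is the constantly zero function. -/
theorem statement9 {X : Type*} [TopologicalSpace X] [CompletelyRegularSpace X] [T2Space X]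
    (h : HasWinningStrategyII (OpenCovers X) (fun 𝒮 => ⋃₀ 𝒮 = Set.univ)) :
    HasWinningStrategyII (OmegaAt (cpZero X)) (fun S => cpZero X ∈ closure S) := by
  obtain ⟨σ, hσ⟩ := exists_pointOpen_strategy h
  have hpick : ∀ (n : ℕ) (S : Set (List (Set X))) (A : Set (Cp X)), ∃ f : Cp X,
      S.Finite → A ∈ OmegaAt (cpZero X) → f ∈ A ∧ ∀ l ∈ S, σ l ∈ smallSet n f := by
    intro n S A
    by_cases hSA : S.Finite ∧ A ∈ OmegaAt (cpZero X)
    · obtain ⟨f, hf, hs⟩ := exists_mem_smallSet n (hSA.1.image σ) hSA.2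
      exact ⟨f, fun _ _ => ⟨hf, fun l hl => hs ⟨l, hl, rfl⟩⟩⟩
    · exact ⟨cpZero X, fun h1 h2 => absurd ⟨h1, h2⟩ hSA⟩
  choose pick hpick using hpick
  refine ⟨fun n D => pick n (subHist pick n (Fin.init D)) (D (Fin.last n)),
    fun n D hD => (hpick n _ _ (finite_subHist pick n _) (hD _)).1, fun D hD => ?_⟩
  let S : ℕ → Set (List (Set X)) := fun n => subHist pick n fun i => D i.val
  let f : ℕ → Cp X := fun n => pick n (S n) (D n)
  let U : ℕ → Set X := fun n => smallSet n (f n)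
  have hS : ∀ n, S (n + 1) = S n ∪ List.cons (U n) '' S n := fun _ => rfl
  have hmono : Monotone S := monotone_nat_of_le_succ fun n => by
    rw [hS]; exact subset_union_left
  have hU : ∀ n, ∀ l ∈ S n, σ l ∈ U n := fun n =>
    (hpick n (S n) (D n) (finite_subHist pick n _) (hD n)).2
  have hsub : ∀ e : ℕ → ℕ, StrictMono e → ∀ k, revHist (U ∘ e) k ∈ S (e k) := by
    intro e he k
    induction k with
    | zero => exact hmono (Nat.zero_le (e 0)) (mem_singleton _)
    | succ k ih =>
      refine hmono (Nat.succ_le_of_lt (he (Nat.lt_succ_self k))) ?_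
      rw [hS]
      exact Or.inr ⟨_, ih, rfl⟩
  -- A point missing infinitely many `U n` would be missed by a whole subsequence.
  have hev : ∀ x, ∀ᶠ n in Filter.atTop, x ∈ U n := by
    intro x
    by_contra hx
    obtain ⟨e, he, hxe⟩ :=
      Filter.extraction_of_frequently_atTop (Filter.not_eventually.mp hx)
    obtain ⟨k, hk⟩ := hσ (U ∘ e) (fun k => isOpen_smallSet _ _)
      (fun k => hU _ _ (hsub e he k)) x
    exact hxe k hk
  have hlim : Filter.Tendsto f Filter.atTop (𝓝 (cpZero X)) := by
    rw [tendsto_subtype_rng, tendsto_pi_nhds]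
    intro x
    refine squeeze_zero_norm' ?_ (tendsto_one_div_add_atTop_nhds_zero_nat (𝕜 := ℝ))
    filter_upwards [hev x] with n hn
    exact le_of_lt hn
  exact mem_closure_of_tendsto hlim (Filter.Eventually.of_forall fun n => ⟨n, rfl⟩)
end

section
/- Let X be a Tychonoff space. If player II has a winning strategy in the game G1(𝒪, 𝒪) played on X, then C_p(X) is productively countably tight. -/
/-!
Three facts combine.

* Galvin's duality (`exists_point_strategy`): a winning strategy for II in the Rothberger game
  turns into a strategy that names points `x₀, x₁, …`, the opponent answering with open sets
  `Uₙ ∋ xₙ`, such that the `Uₙ` always cover `X`. After any history there is a point all of whose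
  open neighbourhoods are possible answers of II; otherwise each point would have a neighbourhood
  which is never an answer, and II could not answer the cover by these neighbourhoods.
* Naming at each stage the finitely many points which this strategy gives on all subsequences of the
  history, one forces every subsequence of `(Uₙ)` to cover `X`, so each point lies in all but
  finitely many `Uₙ` (`exists_finite_strategy`). With `Uₙ = {x | |fₙ x - f x| < 1 / (n + 1)}` this
  is a strategy that names neighbourhoods of `f` in `C_p(X)` and makes the opponent's points
  converge to `f` (`cp_isWPoint`): every `f` is a W-point in the sense of Gruenhage.
* If `z` is a W-point of `Z` and `Y` is countably tight at `y`, then `Z × Y` is countably tight at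
  `(z, y)` (`IsWPoint.countablyTightAt_prod`). Along the tree of histories, tightness of `Y` reduces
  the possible moves at each node to countably many, while every neighbourhood of `y` still
  contains the second coordinates of some branch; the first coordinates of that branch converge
  to `z`.
-/

open Set Topology

open Filter

/-- Galvin's duality: a winning strategy for II in the Rothberger game yields a strategy
choosing a point after each finite sequence of open sets, such that any sequence of open sets
containing the successively chosen points covers `X`. -/
theorem exists_point_strategy {X : Type*} [TopologicalSpace X]
    (h : HasWinningStrategyII (OpenCovers X) (fun 𝒮 => ⋃₀ 𝒮 = Set.univ)) :
    ∃ σ : List (Set X) → X, ∀ U : ℕ → Set X, (∀ n, IsOpen (U n)) →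
      (∀ n, σ ((List.range n).map U) ∈ U n) → ∀ x, ∃ n, x ∈ U n := by
  obtain ⟨F, hF, hwin⟩ := h
  -- The answer of II to the move `C` made after the history `l`. The default value of `getD` is
  -- never used, since `i` is less than the length of the list.
  let G : List (OpenCovers X) → OpenCovers X → Set X := fun l C =>
    F l.length (fun i => ((l ++ [C]).getD i.val C).val)
  have hG : ∀ l C, G l C ∈ C.val := by
    intro l C
    have := hF l.length (fun i => ((l ++ [C]).getD i.val C).val) (fun i => Subtype.property _)
    simpa [G] using this
  have key : ∀ l, ∃ x, ∀ U : Set X, ∃ C : OpenCovers X, IsOpen U → x ∈ U → G l C = U := by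
    intro l
    by_contra! hcon
    choose V hV using hcon
    have hcov : Set.range V ∈ OpenCovers X := by
      refine ⟨?_, ?_⟩
      · rintro _ ⟨x, rfl⟩
        exact (hV x ⟨{Set.univ}, by simp [OpenCovers]⟩).1
      · refine Set.eq_univ_of_forall fun x => ⟨V x, ⟨x, rfl⟩, ?_⟩
        exact (hV x ⟨{Set.univ}, by simp [OpenCovers]⟩).2.1
    obtain ⟨x, hx⟩ := hG l ⟨_, hcov⟩
    exact (hV x ⟨_, hcov⟩).2.2 hx.symm
  choose p c hc using key
  -- The history of covers that a history of open sets stands for.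
  let H : List (Set X) → List (OpenCovers X) :=
    fun l => l.foldl (fun a U => a ++ [c a U]) []
  refine ⟨fun l => p (H l), fun U hU hmem x => ?_⟩
  let D : ℕ → OpenCovers X := fun n => c (H ((List.range n).map U)) (U n)
  have hH : ∀ n, H ((List.range n).map U) = (List.range n).map D := by
    intro n
    induction n with
    | zero => rfl
    | succ n ih =>
      have : H ((List.range (n + 1)).map U) = H ((List.range n).map U) ++ [D n] := by
        simp [H, D, List.range_succ, List.foldl_append]
      rw [this, ih]
      simp [List.range_succ]
  have hans : ∀ n, F n (fun i => (D i.val).val) = U n := by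
    intro n
    have h1 : G ((List.range n).map D) (D n) = U n := by
      rw [← hH]
      exact hc _ _ (hU n) (hmem n)
    rw [← h1]
    have gen : ∀ (l : List (OpenCovers X)), l = (List.range n).map D →
        ∀ m, m = l.length → F m (fun i => (D i.val).val) = G l (D n) := by
      rintro l hl m rfl
      simp only [G]
      congr 1
      funext i
      have hlen : l.length = n := by simp [hl]
      have hi : i.val < n + 1 := hlen ▸ i.isLt
      have hl' : l ++ [D n] = (List.range (n + 1)).map D := by
        simp [hl, List.range_succ]
      rw [hl', List.getD_eq_getElem _ _ (by simpa using hi)]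
      simp
    exact gen _ rfl n (by simp)
  have hx : x ∈ ⋃₀ {y | ∃ n : ℕ, y = F n fun i => (D i.val).val} := by
    rw [hwin (fun n => (D n).val) (fun n => (D n).property)]
    trivial
  obtain ⟨_, ⟨n, rfl⟩, hn⟩ := hx
  exact ⟨n, hans n ▸ hn⟩

/-- Choosing finite sets instead of points, one can force every point to lie in all but finitely
many of the opponent's open sets: the finite set consists of the points chosen by the strategy of
`exists_point_strategy` on all subsequences of the history. -/
theorem exists_finite_strategy {X : Type*} [TopologicalSpace X]
    (h : HasWinningStrategyII (OpenCovers X) (fun 𝒮 => ⋃₀ 𝒮 = Set.univ)) :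
    ∃ τ : List (Set X) → Set X, (∀ l, (τ l).Finite) ∧ ∀ U : ℕ → Set X, (∀ n, IsOpen (U n)) →
      (∀ n, τ ((List.range n).map U) ⊆ U n) → ∀ x, ∀ᶠ n in atTop, x ∈ U n := by
  obtain ⟨σ, hσ⟩ := exists_point_strategy h
  refine ⟨fun l => σ '' {l' | l' ∈ l.sublists}, fun l => (List.finite_toSet _).image _,
    fun U hU hsub x => ?_⟩
  by_contra hx
  obtain ⟨φ, hφ, hφx⟩ := extraction_of_frequently_atTop (not_eventually.mp hx)
  obtain ⟨n, hn⟩ := hσ (fun k => U (φ k)) (fun k => hU _) (fun k => by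
    refine hsub (φ k) ⟨_, ?_, rfl⟩
    simp only [Set.mem_ofPred_eq, List.mem_sublists]
    have hs : ((List.range k).map φ).Sublist (List.range (φ k)) := by
      refine List.sublist_of_subperm_of_sortedLE
        (List.subperm_of_subset (List.nodup_range.map hφ.injective) ?_)
        (List.pairwise_lt_range.map φ fun _ _ hab => (hφ hab).le).sortedLE (List.sortedLT_range _).sortedLE
      · intro a ha
        simp only [List.mem_map, List.mem_range] at ha ⊢
        obtain ⟨i, hi, rfl⟩ := ha
        exact hφ hi
    simpa [Function.comp_def] using hs.map U) x
  exact hφx n hn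

/-- `z` is a W-point (Gruenhage): there is a strategy `O`, choosing a neighbourhood of `z` after
each finite sequence of points, such that every sequence of points picked from the successively
chosen neighbourhoods converges to `z`. -/
def IsWPoint {Z : Type*} [TopologicalSpace Z] (z : Z) : Prop :=
  ∃ O : List Z → Set Z, (∀ l, O l ∈ 𝓝 z) ∧
    ∀ s : ℕ → Z, (∀ n, s n ∈ O ((List.range n).map s)) → Tendsto s atTop (𝓝 z)

theorem cp_isWPoint {X : Type*} [TopologicalSpace X]
    (h : HasWinningStrategyII (OpenCovers X) (fun 𝒮 => ⋃₀ 𝒮 = Set.univ)) (f : Cp X) :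
    IsWPoint f := by
  obtain ⟨τ, hfin, hτ⟩ := exists_finite_strategy h
  let V : ℕ → Cp X → Set X := fun n g => {x | |g.val x - f.val x| < 1 / ((n : ℝ) + 1)}
  have hV : ∀ n g, IsOpen (V n g) := fun n g =>
    isOpen_lt ((g.property.sub f.property).abs) continuous_const
  refine ⟨fun l => {g | τ (l.mapIdx V) ⊆ V l.length g}, fun l => ?_, fun s hs => ?_⟩
  · have : {g : Cp X | τ (l.mapIdx V) ⊆ V l.length g} =
        ⋂ x ∈ τ (l.mapIdx V), {g : Cp X | x ∈ V l.length g} := by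
      ext g
      simp [Set.subset_def]
    change {g : Cp X | τ (l.mapIdx V) ⊆ V l.length g} ∈ 𝓝 f
    rw [this, biInter_mem (hfin _)]
    intro x _
    have hc : Continuous fun g : Cp X => |g.val x - f.val x| :=
      (((continuous_apply x).comp continuous_subtype_val).sub continuous_const).abs
    refine (isOpen_lt hc continuous_const).mem_nhds ?_
    simp only [Set.mem_ofPred_eq, sub_self, abs_zero]
    positivity
  · have hmap : ∀ n, ((List.range n).map s).mapIdx V =
        (List.range n).map (fun i => V i (s i)) := by
      intro n
      apply List.ext_getElem <;> simp
    have hev := hτ (fun n => V n (s n)) (fun n => hV _ _) (fun n => by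
      have := hs n
      simpa [hmap] using this)
    rw [tendsto_subtype_rng, tendsto_pi_nhds]
    intro x
    rw [tendsto_iff_dist_tendsto_zero]
    refine squeeze_zero' (Eventually.of_forall fun _ => dist_nonneg) ?_
      tendsto_one_div_add_atTop_nhds_zero_nat
    filter_upwards [hev x] with n hn
    exact le_of_lt hn

theorem IsWPoint.countablyTightAt_prod {Z Y : Type*} [TopologicalSpace Z] [TopologicalSpace Y]
    {z : Z} {y : Y} (hz : IsWPoint z) (hy : CountablyTightAt Y y) :
    CountablyTightAt (Z × Y) (z, y) := by
  obtain ⟨O, hO, hconv⟩ := hz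
  intro A hA
  -- Countably many moves at the node `l` suffice to accumulate at `y` in the second coordinate.
  have step : ∀ l : List (Z × Y), ∃ B ⊆ A, B.Countable ∧ (∀ b ∈ B, b.1 ∈ O (l.map Prod.fst)) ∧
      y ∈ closure (Prod.snd '' B) := by
    intro l
    have h1 : y ∈ closure (Prod.snd '' (A ∩ {b | b.1 ∈ O (l.map Prod.fst)})) := by
      rw [mem_closure_iff_nhds]
      intro W hW
      obtain ⟨b, hb, hbA⟩ := mem_closure_iff_nhds.mp hA _
        (prod_mem_nhds (hO (l.map Prod.fst)) hW)
      exact ⟨b.2, hb.2, b, ⟨hbA, hb.1⟩, rfl⟩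
    obtain ⟨C, hCsub, hCc, hC⟩ := hy _ h1
    obtain ⟨B, hBsub, hBC⟩ := Set.SurjOn.exists_bijOn_subset hCsub
    have hB : B.Countable := by
      refine Set.countable_of_injective_of_countable_image hBC.injOn ?_
      rwa [hBC.image_eq]
    exact ⟨B, fun b hb => (hBsub hb).1, hB, fun b hb => (hBsub hb).2, by rwa [hBC.image_eq]⟩
  choose B hBA hBc hBO hBy using step
  -- `T n` is the `n`-th level of the tree of histories.
  let T : ℕ → Set (List (Z × Y)) := fun n =>
    Nat.rec {[]} (fun _ S => ⋃ l ∈ S, (fun b => l ++ [b]) '' B l) n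
  have hTc : ∀ n, (T n).Countable := by
    intro n
    induction n with
    | zero => exact Set.countable_singleton _
    | succ n ih => exact ih.biUnion fun l _ => (hBc l).image _
  refine ⟨⋃ n, ⋃ l ∈ T n, B l, ?_, ?_, ?_⟩
  · simp only [Set.iUnion_subset_iff]
    exact fun _ l _ => hBA l
  · exact Set.countable_iUnion fun n => (hTc n).biUnion fun l _ => hBc l
  · rw [mem_closure_iff_nhds]
    intro N hN
    obtain ⟨U, hU, W, hW, hUW⟩ := mem_nhds_prod_iff.mp hN
    have hpick : ∀ l, ∃ b ∈ B l, b.2 ∈ W := by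
      intro l
      obtain ⟨_, hw, b, hb, rfl⟩ := mem_closure_iff_nhds.mp (hBy l) W hW
      exact ⟨b, hb, hw⟩
    choose g hgB hgW using hpick
    let H : ℕ → List (Z × Y) := fun n => Nat.rec [] (fun _ l => l ++ [g l]) n
    have hHs : ∀ n, H (n + 1) = H n ++ [g (H n)] := fun _ => rfl
    have hHT : ∀ n, H n ∈ T n := by
      intro n
      induction n with
      | zero => exact Set.mem_singleton _
      | succ n ih => exact Set.mem_biUnion ih ⟨_, hgB _, rfl⟩
    have hHmap : ∀ n, (H n).map Prod.fst = (List.range n).map (fun k => (g (H k)).1) := by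
      intro n
      induction n with
      | zero => rfl
      | succ n ih => rw [hHs, List.map_append, ih]; simp [List.range_succ]
    have hlim := hconv (fun n => (g (H n)).1) (fun n => hHmap n ▸ hBO _ _ (hgB (H n)))
    obtain ⟨n, hn⟩ := (hlim.eventually_mem hU).exists
    exact ⟨g (H n), hUW ⟨hn, hgW _⟩,
      Set.mem_iUnion.mpr ⟨n, Set.mem_biUnion (hHT n) (hgB _)⟩⟩

/-- if `X` is Tychonoff and player II has a winning strategy in the Rothberger
game `G₁(𝒪, 𝒪)` played on `X`, then `C_p(X)` is productively countably tight: `C_p(X) × Y`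
is countably tight for every countably tight space `Y`. -/
theorem statement10 {X : Type*} [TopologicalSpace X] [CompletelyRegularSpace X] [T2Space X]
    (h : HasWinningStrategyII (OpenCovers X) (fun 𝒮 => ⋃₀ 𝒮 = Set.univ)) :
    ∀ (Y : Type*) [TopologicalSpace Y], (∀ y : Y, CountablyTightAt Y y) →
      ∀ z : Cp X × Y, CountablyTightAt (Cp X × Y) z := by
  intro Y _ hY z
  exact (cp_isWPoint h z.1).countablyTightAt_prod (hY z.2)
end

section
/- Let X be a Tychonoff space. If player II has a winning strategy in the game G1(Ω, Ω) played on X, then the G_δ modification X_δ of X is Lindelöf. -/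
/-!
A winning strategy of player II in the selection game yields a winning strategy of player I in the
finite-open game: at every position there is a finite set `K` such that every open `U ⊇ K` is the
answer of player II to some ω-cover (`exists_finite_forced`). Otherwise each finite `K` is contained
in an open set `U_K` that is never an answer; but the `U_K` form an ω-cover, and the answer to
that cover is one of them.

Given an open cover of `X_δ`, every point `x` lies in a set `⋂ n, g x n`, with `g x` a decreasing
sequence of open sets, that is contained in a member of the cover
(`exists_antitone_of_isOpen_gdelta`). Index by `ω^{<ω}` the runs of the game in which player II is
led to pick `⋃ x ∈ K, g x m` for some `m`, where `K` is the finite set attached to the current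
position. Only countably many finite sets `K` occur. A point `y` outside `⋂ n, g x n`
for all `x` in these sets avoids, at each position, some `⋃ x ∈ K, g x m`, since `K` is finite and the
`g x` are decreasing. Following these `m` gives a run in which no set chosen by II
contains `y`, contradicting that the strategy wins. So countably many members of the cover suffice.
-/

open Set Topology

/-- The collection of ω-covers of `X`: families of open sets such that every finite subset
of `X` is contained in some member. -/
def OmegaCovers (X : Type*) [TopologicalSpace X] : Set (Set (Set X)) :=
  {𝒰 | (∀ U ∈ 𝒰, IsOpen U) ∧ ∀ F : Set X, F.Finite → ∃ U ∈ 𝒰, F ⊆ U}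

/-- The `G_δ` modification `X_δ` of `X`: the topology generated by the `G_δ` subsets of `X`. -/
def gdeltaModification (X : Type*) [TopologicalSpace X] : TopologicalSpace X :=
  TopologicalSpace.generateFrom
    {S : Set X | ∃ g : ℕ → Set X, (∀ n, IsOpen (g n)) ∧ S = ⋂ n, g n}

/-- At the position where `p 0, …, p (n - 1)` have been played, some finite `K` has the property
that player I can make II choose any prescribed open superset of `K`. A position is encoded as a
total sequence of ω-covers, of which only the first `n` terms matter. -/
lemma exists_finite_forced {X : Type*} [TopologicalSpace X]
    (F : (n : ℕ) → (Fin (n + 1) → Set (Set X)) → Set X)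
    (hF : ∀ (n : ℕ) (D : Fin (n + 1) → Set (Set X)), (∀ i, D i ∈ OmegaCovers X) →
      F n D ∈ D (Fin.last n))
    (n : ℕ) (p : ℕ → OmegaCovers X) :
    ∃ K : Set X, K.Finite ∧ ∀ U : Set X, IsOpen U → K ⊆ U →
      ∃ D : OmegaCovers X, F n (fun i => (Function.update p n D i.val : Set (Set X))) = U := by
  by_contra! hcon
  choose! U hUo hKU hU using hcon
  let D : OmegaCovers X := ⟨{V | ∃ K : Set X, K.Finite ∧ V = U K}, by
    refine ⟨?_, fun K hK => ⟨U K, ⟨K, hK, rfl⟩, hKU K hK⟩⟩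
    rintro V ⟨K, hK, rfl⟩
    exact hUo K hK⟩
  have hmem := hF n (fun i => (Function.update p n D i.val : Set (Set X)))
    (fun i => (Function.update p n D i.val).2)
  simp only [Fin.val_last, Function.update_self] at hmem
  obtain ⟨K, hK, hEq⟩ := hmem
  exact hU K hK D hEq

lemma exists_antitone_of_isOpen_gdelta {X : Type*} [TopologicalSpace X] {V : Set X}
    (hV : IsOpen[gdeltaModification X] V) {x : X} (hx : x ∈ V) :
    ∃ g : ℕ → Set X, (∀ n, IsOpen (g n)) ∧ Antitone g ∧ (∀ n, x ∈ g n) ∧ ⋂ n, g n ⊆ V := by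
  have hV' : TopologicalSpace.GenerateOpen
    {S : Set X | ∃ g : ℕ → Set X, (∀ n, IsOpen (g n)) ∧ S = ⋂ n, g n} V := hV
  clear hV
  induction hV' with
  | basic s hs =>
    obtain ⟨g, hg, rfl⟩ := hs
    refine ⟨fun n => ⋂ m ∈ Set.Iic n, g m, fun n => (Set.finite_Iic n).isOpen_biInter
      fun m _ => hg m, ?_, ?_, ?_⟩
    · intro a b hab
      exact Set.biInter_subset_biInter_left (Set.Iic_subset_Iic.2 hab)
    · intro n
      exact Set.mem_iInter₂.2 fun m _ => Set.mem_iInter.1 hx m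
    · intro z hz
      exact Set.mem_iInter.2 fun m =>
        Set.mem_iInter₂.1 (Set.mem_iInter.1 hz m) m (Set.mem_Iic.2 le_rfl)
  | univ => exact ⟨fun _ => Set.univ, fun _ => isOpen_univ, antitone_const, fun _ => trivial,
      Set.subset_univ _⟩
  | inter s t _ _ ihs iht =>
    obtain ⟨g, hgo, hga, hgx, hgs⟩ := ihs hx.1
    obtain ⟨k, hko, hka, hkx, hkt⟩ := iht hx.2
    refine ⟨fun n => g n ∩ k n, fun n => (hgo n).inter (hko n),
      fun a b hab => Set.inter_subset_inter (hga hab) (hka hab), fun n => ⟨hgx n, hkx n⟩, ?_⟩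
    rw [Set.iInter_inter_distrib]
    exact Set.inter_subset_inter hgs hkt
  | sUnion S _ ih =>
    obtain ⟨s, hs, hxs⟩ := hx
    obtain ⟨g, hgo, hga, hgx, hgs⟩ := ih s hs hxs
    exact ⟨g, hgo, hga, hgx, hgs.trans (Set.subset_sUnion_of_mem hs)⟩

/-- This is where the finiteness of `K` and the monotonicity of the `g x` are used: the
intersection of the unions `⋃ x ∈ K, g x m` over `m` is `⋃ x ∈ K, ⋂ m, g x m`. -/
lemma exists_notMem_biUnion {X : Type*} {g : X → ℕ → Set X} (hg : ∀ x, Antitone (g x))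
    {K : Set X} (hK : K.Finite) {y : X} (hy : ∀ x ∈ K, y ∉ ⋂ n, g x n) :
    ∃ m, y ∉ ⋃ x ∈ K, g x m := by
  simp only [Set.mem_iInter, not_forall] at hy
  choose! k hk using hy
  obtain ⟨m, hm⟩ := (hK.image k).bddAbove
  refine ⟨m, fun hmem => ?_⟩
  obtain ⟨x, hx, hyx⟩ := Set.mem_iUnion₂.1 hmem
  exact hk x hx (hg x (hm (Set.mem_image_of_mem k hx)) hyx)

/-- If player II wins and each `x` is assigned a decreasing sequence `g x` of open sets containing
it, then the sets `⋂ n, g x n` for `x` in some countable set cover the space. -/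
lemma exists_countable_cover {X : Type*} [TopologicalSpace X]
    (h : HasWinningStrategyII (OmegaCovers X)
      (fun 𝒮 => ∀ F : Set X, F.Finite → ∃ U ∈ 𝒮, F ⊆ U))
    (g : X → ℕ → Set X) (hgo : ∀ x n, IsOpen (g x n)) (hga : ∀ x, Antitone (g x))
    (hgx : ∀ x n, x ∈ g x n) :
    ∃ C : Set X, C.Countable ∧ ∀ y, ∃ x ∈ C, y ∈ ⋂ n, g x n := by
  obtain ⟨F, hF, hwin⟩ := h
  choose K hKf hK using exists_finite_forced F hF
  choose R hR using fun (n : ℕ) (p : ℕ → OmegaCovers X) (m : ℕ) =>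
    hK n p (⋃ x ∈ K n p, g x m) (isOpen_biUnion fun x _ => hgo x m)
      (fun x hx => Set.mem_biUnion hx (hgx x m))
  let c₀ : OmegaCovers X := ⟨{Set.univ}, by simp [OmegaCovers]⟩
  -- The run indexed by a list of naturals, the head of the list being the latest choice.
  let pos : List ℕ → ℕ → OmegaCovers X := fun s => List.rec (fun _ => c₀)
    (fun m t p => Function.update p t.length (R t.length p m)) s
  have pos_cons (m : ℕ) (t : List ℕ) : pos (m :: t) =
      Function.update (pos t) t.length (R t.length (pos t) m) := rfl
  refine ⟨⋃ s : List ℕ, K s.length (pos s),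
    Set.countable_iUnion fun s => (hKf _ _).countable, fun y => ?_⟩
  by_contra! hcon
  have hy (s : List ℕ) : ∃ m, y ∉ ⋃ x ∈ K s.length (pos s), g x m :=
    exists_notMem_biUnion hga (hKf _ _) fun x hx => hcon x (Set.mem_iUnion.2 ⟨s, hx⟩)
  choose m hm using hy
  -- The branch along which `y` is avoided at every step.
  let b : ℕ → List ℕ := fun n => Nat.rec [] (fun _ t => m t :: t) n
  have b_succ (n : ℕ) : b (n + 1) = m (b n) :: b n := rfl
  have hlen (n : ℕ) : (b n).length = n := by
    induction n with
    | zero => rfl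
    | succ n ih => rw [b_succ, List.length_cons, ih]
  have hstep (n : ℕ) : pos (b (n + 1)) =
      Function.update (pos (b n)) n (R n (pos (b n)) (m (b n))) := by
    rw [b_succ, pos_cons, hlen]
  have hstable (i k : ℕ) : pos (b (i + 1 + k)) i = pos (b (i + 1)) i := by
    induction k with
    | zero => rfl
    | succ k ih =>
      rw [← add_assoc, hstep, Function.update_of_ne (by omega), ih]
  obtain ⟨U, ⟨n, rfl⟩, hyU⟩ := hwin (fun n => (pos (b (n + 1)) n : Set (Set X)))
    (fun n => (pos (b (n + 1)) n).2) {y} (Set.finite_singleton y)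
  have hrun : (fun i : Fin (n + 1) => (pos (b (i.val + 1)) i.val : Set (Set X))) =
      fun i : Fin (n + 1) =>
        (Function.update (pos (b n)) n (R n (pos (b n)) (m (b n))) i.val : Set (Set X)) := by
    funext i
    obtain ⟨k, hk⟩ := Nat.exists_eq_add_of_le (show i.val + 1 ≤ n + 1 from i.isLt)
    have hi := hstable i.val k
    rw [← hk] at hi
    rw [← hstep, hi]
  have hyn := hm (b n)
  rw [hlen] at hyn
  rw [hrun, hR] at hyU
  exact hyn (hyU rfl)

/-- if `X` is Tychonoff and player II has a winning strategy in the game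
`G₁(Ω, Ω)` (played with ω-covers) on `X`, then the `G_δ` modification `X_δ` is Lindelöf. -/
theorem statement11 {X : Type*} [TopologicalSpace X] [CompletelyRegularSpace X] [T2Space X]
    (h : HasWinningStrategyII (OmegaCovers X)
      (fun 𝒮 => ∀ F : Set X, F.Finite → ∃ U ∈ 𝒮, F ⊆ U)) :
    @LindelofSpace X (gdeltaModification X) := by
  refine @LindelofSpace.mk X (gdeltaModification X) ?_
  refine @isLindelof_of_countable_subcover X (gdeltaModification X) Set.univ ?_
  intro ι V hV hcov
  choose i hi using fun x => Set.mem_iUnion.1 (hcov (Set.mem_univ x))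
  choose g hgo hga hgx hgV using fun x => exists_antitone_of_isOpen_gdelta (hV (i x)) (hi x)
  obtain ⟨C, hC, hCcov⟩ := exists_countable_cover h g hgo hga hgx
  refine ⟨i '' C, hC.image i, fun y _ => ?_⟩
  obtain ⟨x, hx, hyx⟩ := hCcov y
  exact Set.mem_biUnion (Set.mem_image_of_mem i hx) (hgV x hyx)
end
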